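/- Let w be a smooth solution of P_XXXIV[α] on an open interval I ⊆ ℝ, and let ψ_0 be a nowhere-vanishing smooth function on I satisfying both (L1) and (L2) with this w and parameter α. Define the sequences ψ_n, φ_n and the Hankel determinants τ_N from w and ψ_0. For an integer N such that τ_N and τ_{N+1} are nowhere zero on I, set Ψ_N = τ_{N+1}/τ_N and W = w + 2(τ_N''·τ_N − (τ_N')²)/τ_N². Then on I the function Ψ_N satisfies 2W·Ψ_N' − W'·Ψ_N − 4(α+N)·Ψ_N = 0 and Ψ_N'' + (W − 2z)·Ψ_N = 0. -/

import Mathlib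

/-- The Hankel determinant `τ_N` built from the sequences `ψ` (for `N > 0`) and
`φ` (for `N < 0`); `τ_0 = 1` (determinant of the empty matrix). -/
noncomputable def hankelTau (ψ φ : ℕ → ℝ → ℝ) (N : ℤ) : ℝ → ℝ :=
  fun z =>
    if 0 ≤ N then
      Matrix.det (Matrix.of fun i j : Fin N.toNat => ψ ((i : ℕ) + (j : ℕ)) z)
    else
      Matrix.det (Matrix.of fun i j : Fin (-N).toNat => φ ((i : ℕ) + (j : ℕ)) z)

/-!
With `p = ψ₀` and `q = w / (2ψ₀)`, the equations (L1) and (L2) say that the Wronskian `p'q - pq'` is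
the constant `2α` and that `p'' = (2z - 2pq) p`; together they imply `q'' = (2z - 2pq) q`. Writing
derivatives of Hankel minors as traces against the adjugate and combining them by the
Desnanot-Jacobi identity gives the Toda equation
`τ_{N+1} τ_{N-1} = τ_N'' τ_N - (τ_N')² + pq τ_N²`.

Given the Toda equation, the two wave equations become bilinear relations between `τ_{N-1}`, `τ_N`,
`τ_{N+1}`, which pass from `N` to `N + 1` by induction. The induction divides by `τ_N`, which may
vanish for the given solution even when the tau function in question does not. It is
therefore carried out for the generic solution, in the differential ring of polynomials in
`z, p, p', q, q'`: this is a domain in which no `τ_N` is zero, because the relation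
`τ_{N+1}' τ_{N-1} - τ_{N+1} τ_{N-1}' = (p'q - pq' + 2N) τ_N²` prevents `τ_{N+1}` from being zero
when `τ_N` is not. The exchange of `p` and `q` yields negative `N`, and specialization to functions
yields the theorem.
-/

namespace PainleveXXXIV

open Matrix

section Determinants

variable {R m n : Type*} [CommRing R] [Fintype m] [DecidableEq m]

lemma trace_adjugate_mul_mul_self (A L : Matrix m m R) :
    (A.adjugate * (L * A)).trace = A.det * L.trace := by
  rw [trace_mul_comm, Matrix.mul_assoc, mul_adjugate, Matrix.mul_smul, Matrix.mul_one,
    trace_smul, smul_eq_mul]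

lemma trace_adjugate_mul_self_mul (A K : Matrix m m R) :
    (A.adjugate * (A * K)).trace = A.det * K.trace := by
  rw [← Matrix.mul_assoc, adjugate_mul, Matrix.smul_mul, Matrix.one_mul, trace_smul, smul_eq_mul]

lemma trace_adjugate_mul_eq_sum_det_updateCol (A S : Matrix m m R) :
    (A.adjugate * S).trace = ∑ j, (A.updateCol j fun i => S i j).det := by
  refine Finset.sum_congr rfl fun j _ => ?_
  rw [← cramer_apply, cramer_eq_adjugate_mulVec]
  rfl

lemma trace_adjugate_mul_eq_sum_det_updateRow (A S : Matrix m m R) :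
    (A.adjugate * S).trace = ∑ i, (A.updateRow i (S i)).det := by
  rw [← trace_transpose, transpose_mul, trace_mul_comm, adjugate_transpose,
    trace_adjugate_mul_eq_sum_det_updateCol]
  exact Finset.sum_congr rfl fun i _ => by rw [← det_transpose, updateCol_transpose]; rfl

lemma trace_adjugate_mul_vecMulVec_single (A : Matrix m m R) (v : m → R) (j : m) :
    (A.adjugate * vecMulVec v (Pi.single j 1)).trace = (A.updateCol j v).det := by
  rw [mul_vecMulVec, trace_vecMulVec, dotProduct_single_one, ← cramer_eq_adjugate_mulVec,
    cramer_apply]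

lemma trace_adjugate_mul_of_rows_shifted {N : ℕ} {A S : Matrix (Fin (N + 1)) (Fin (N + 1)) R}
    (hS : ∀ i : Fin N, S i.castSucc = A i.succ) :
    (A.adjugate * S).trace = (A.updateRow (Fin.last N) (S (Fin.last N))).det := by
  rw [trace_adjugate_mul_eq_sum_det_updateRow, Fin.sum_univ_castSucc, Finset.sum_eq_zero, zero_add]
  intro i _
  rw [hS]
  exact det_updateRow_eq_zero Fin.castSucc_lt_succ.ne'

/-- The minor of a `2 × 2` block matrix that borders the upper left block by row `a` and
column `b`; such minors are the entries in the determinant identities of Sylvester and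
Desnanot–Jacobi. -/
def borderedMinor (M : Matrix (m ⊕ n) (m ⊕ n) R) (a b : n) : R :=
  (M.submatrix (Sum.map id fun _ : Fin 1 => a) (Sum.map id fun _ : Fin 1 => b)).det

lemma det_mul_det_toBlocks₁₁_pow [Fintype n] [DecidableEq n] (M : Matrix (m ⊕ n) (m ⊕ n) R) :
    M.det * M.toBlocks₁₁.det ^ Fintype.card n = M.toBlocks₁₁.det *
      (M.toBlocks₁₁.det • M.toBlocks₂₂ -
        M.toBlocks₂₁ * M.toBlocks₁₁.adjugate * M.toBlocks₁₂).det := by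
  set A := M.toBlocks₁₁
  set B := M.toBlocks₁₂
  set C := M.toBlocks₂₁
  set E := M.toBlocks₂₂
  have elimination : M * fromBlocks 1 (-(A.adjugate * B)) 0 (A.det • 1) =
      fromBlocks A 0 C (A.det • E - C * A.adjugate * B) := by
    rw [← M.fromBlocks_toBlocks, fromBlocks_multiply]
    simp [A, B, C, E, ← Matrix.mul_assoc, mul_adjugate, sub_eq_neg_add]
  simpa using congrArg det elimination

lemma borderedMinor_eq_of_isRegular {M : Matrix (m ⊕ n) (m ⊕ n) R}
    (hM : IsRegular M.toBlocks₁₁.det) (a b : n) :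
    borderedMinor M a b = (M.toBlocks₁₁.det • M.toBlocks₂₂ -
      M.toBlocks₂₁ * M.toBlocks₁₁.adjugate * M.toBlocks₁₂) a b := by
  have h := det_mul_det_toBlocks₁₁_pow
    (M.submatrix (Sum.map id fun _ : Fin 1 => a) (Sum.map id fun _ : Fin 1 => b))
  rw [mul_comm, Fintype.card_fin, pow_one, det_fin_one] at h
  exact hM.left h

lemma desnanot_jacobi_of_isRegular {M : Matrix (m ⊕ Fin 2) (m ⊕ Fin 2) R}
    (hM : IsRegular M.toBlocks₁₁.det) :
    M.det * M.toBlocks₁₁.det =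
      borderedMinor M 0 0 * borderedMinor M 1 1 - borderedMinor M 0 1 * borderedMinor M 1 0 := by
  have h := det_mul_det_toBlocks₁₁_pow M
  simp only [det_fin_two, ← borderedMinor_eq_of_isRegular hM] at h
  apply hM.left
  rw [Fintype.card_fin] at h
  linear_combination h

open Polynomial in
theorem desnanot_jacobi (M : Matrix (m ⊕ Fin 2) (m ⊕ Fin 2) R) :
    M.det * M.toBlocks₁₁.det =
      borderedMinor M 0 0 * borderedMinor M 1 1 - borderedMinor M 0 1 * borderedMinor M 1 0 := by
  let P : Matrix (m ⊕ Fin 2) (m ⊕ Fin 2) R[X] := M.map C + fromBlocks (scalar m X) 0 0 0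
  have hP : P.toBlocks₁₁ = charmatrix (-M.toBlocks₁₁) := by
    ext i j; simp [P, charmatrix, toBlocks₁₁, add_comm]
  have hreg : IsRegular P.toBlocks₁₁.det := hP ▸ (charpoly_monic (-M.toBlocks₁₁)).isRegular
  have hM : P.map (evalRingHom 0) = M := by
    ext (i | i) (j | j) <;> simp [P, Matrix.diagonal_apply, apply_ite]
  have hM₁₁ : P.toBlocks₁₁.map (evalRingHom 0) = M.toBlocks₁₁ := congrArg toBlocks₁₁ hM
  have h := congrArg (evalRingHom 0) (desnanot_jacobi_of_isRegular hreg)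
  simpa only [map_mul, map_sub, borderedMinor, RingHom.map_det, RingHom.mapMatrix_apply,
    ← submatrix_map, hM, hM₁₁] using h

end Determinants

section DerivationDet

variable {k R ι : Type*} [CommRing k] [CommRing R] [Algebra k R] [DecidableEq ι]
  (D : Derivation k R R)

lemma derivation_prod (s : Finset ι) (f : ι → R) :
    D (∏ i ∈ s, f i) = ∑ i ∈ s, D (f i) * ∏ j ∈ s.erase i, f j := by
  induction s using Finset.induction_on with
  | empty => simp
  | insert a s ha ih =>
    have erase_insert (i) (hi : i ∈ s) :
        ∏ j ∈ (insert a s).erase i, f j = f a * ∏ j ∈ s.erase i, f j := by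
      rw [Finset.erase_insert_of_ne (by grind), Finset.prod_insert (by simp [ha])]
    rw [Finset.prod_insert ha, Finset.sum_insert ha, Finset.erase_insert ha, D.leibniz, ih,
      Finset.sum_congr rfl fun i hi => congrArg (D (f i) * ·) (erase_insert i hi), smul_eq_mul,
      smul_eq_mul, Finset.mul_sum, add_comm, mul_comm]
    simp only [mul_left_comm]

variable [Fintype ι]

theorem derivation_det (A : Matrix ι ι R) : D A.det = (A.adjugate * A.map D).trace := by
  simp only [trace_adjugate_mul_eq_sum_det_updateCol, det_apply, map_sum, Units.smul_def,
    map_zsmul, derivation_prod, Finset.smul_sum]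
  rw [Finset.sum_comm]
  refine Finset.sum_congr rfl fun j _ => Finset.sum_congr rfl fun σ _ => ?_
  rw [← Finset.mul_prod_erase Finset.univ _ (Finset.mem_univ j), updateCol_self, map_apply]
  congr 2
  refine Finset.prod_congr rfl fun l hl => ?_
  rw [updateCol_ne (Finset.ne_of_mem_erase hl)]

end DerivationDet

section Hankel

/-- The Hankel determinant `det (f (i + j))` of order `n`. -/
def hankelDet {R : Type*} [CommRing R] (f : ℕ → R) (n : ℕ) : R :=
  (of fun i j : Fin n => f (i + j)).det

/-- The indices `0, …, n - 1, n + a` of the rows, or of the columns, of `hankelMinor`. -/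
def hankelIndex (n a : ℕ) : Fin (n + 1) → ℕ :=
  Fin.snoc (α := fun _ => ℕ) (fun i => (i : ℕ)) (n + a)

/-- The minor of the infinite Hankel matrix `(f (i + j))` with rows `0, …, n - 1, n + a` and
columns `0, …, n - 1, n + b`. -/
def hankelMinor {R : Type*} [CommRing R] (f : ℕ → R) (n a b : ℕ) : R :=
  (of fun i j => f (hankelIndex n a i + hankelIndex n b j)).det

@[simp]
lemma hankelIndex_castSucc (n a : ℕ) (i : Fin n) : hankelIndex n a i.castSucc = i :=
  Fin.snoc_castSucc ..

@[simp]
lemma hankelIndex_last (n a : ℕ) : hankelIndex n a (Fin.last n) = n + a :=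
  Fin.snoc_last ..

@[simp]
lemma hankelIndex_zero (n : ℕ) (i : Fin (n + 1)) : hankelIndex n 0 i = i := by
  cases i using Fin.lastCases <;> simp

lemma hankelIndex_of_lt {n a : ℕ} {i j : Fin (n + 1)} (h : i < j) : hankelIndex n a i = i := by
  obtain ⟨i, rfl⟩ := Fin.exists_castSucc_eq.mpr (h.trans_le j.le_last).ne
  simp

variable {R : Type*} [CommRing R] (f : ℕ → R) (n a b : ℕ)

@[simp]
lemma hankelDet_zero : hankelDet f 0 = 1 := det_isEmpty

@[simp]
lemma hankelDet_one : hankelDet f 1 = f 0 := by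
  simp [hankelDet]

lemma hankelMinor_zero_zero : hankelMinor f n 0 0 = hankelDet f (n + 1) := by
  simp [hankelMinor, hankelDet]

lemma hankelMinor_comm : hankelMinor f n a b = hankelMinor f n b a := by
  rw [hankelMinor, ← det_transpose, hankelMinor]
  congr 1
  ext i j
  simp [add_comm]

theorem hankelDet_desnanot_jacobi :
    hankelDet f (n + 2) * hankelDet f n =
      hankelMinor f n 0 0 * hankelMinor f n 1 1 - hankelMinor f n 1 0 ^ 2 := by
  let M := (of fun i j : Fin (n + 2) => f (i + j)).submatrix finSumFinEquiv finSumFinEquiv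
  have det_M : M.det = hankelDet f (n + 2) := det_submatrix_equiv_self ..
  have minor_M (a b : Fin 2) : borderedMinor M a b = hankelMinor f n a b := by
    rw [borderedMinor, hankelMinor, ← det_submatrix_equiv_self finSumFinEquiv]
    congr 1
    ext (i | i) (j | j) <;> simp [M, hankelIndex, Fin.snoc]
  have block_M : M.toBlocks₁₁.det = hankelDet f n := rfl
  have h := desnanot_jacobi M
  simp only [det_M, block_M, minor_M, Fin.val_zero, Fin.val_one] at h
  rw [h, hankelMinor_comm f n 0 1, sq]

lemma sum_fin_ite_lt {m : ℕ} (i : Fin m) (g : ℕ → R) :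
    ∑ k : Fin m, (if k < i then g k else 0) = ∑ k ∈ Finset.range i, g k := by
  simp_rw [Fin.lt_def]
  rw [Fin.sum_univ_eq_sum_range (fun k => if k < (i : ℕ) then g k else 0), ← Finset.sum_filter]
  congr 1
  ext k
  grind

end Hankel

section TodaSequence

variable {k R : Type*} [CommRing k] [CommRing R] [Algebra k R] (D : Derivation k R R) (p q : R)

/-- The sequence `ψ₀ = p`, `ψₙ₊₁ = D ψₙ + q ∑ ψₖ ψₙ₋₁₋ₖ` in a differential ring. The summation
range is `Fin n` for the sake of the termination proof. -/
def todaSeq : ℕ → R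
  | 0 => p
  | n + 1 => D (todaSeq n) + q * ∑ k : Fin n, todaSeq k * todaSeq (n - 1 - k)
  decreasing_by all_goals omega

@[simp]
lemma todaSeq_zero : todaSeq D p q 0 = p := by
  rw [todaSeq]

lemma todaSeq_succ (n : ℕ) :
    todaSeq D p q (n + 1) = D (todaSeq D p q n) +
      q * ∑ k ∈ Finset.range n, todaSeq D p q k * todaSeq D p q (n - 1 - k) := by
  rw [todaSeq, Fin.sum_univ_eq_sum_range fun k => todaSeq D p q k * todaSeq D p q (n - 1 - k)]

lemma sum_range_add_conv (f : ℕ → R) (i j : ℕ) :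
    ∑ k ∈ Finset.range (i + j), f k * f (i + j - 1 - k) =
      ∑ k ∈ Finset.range i, f (i - 1 - k) * f (k + j) +
        ∑ k ∈ Finset.range j, f (i + k) * f (j - 1 - k) := by
  rw [Finset.sum_range_add, ← Finset.sum_range_reflect]
  congr 1 <;> refine Finset.sum_congr rfl fun k hk => ?_ <;>
    rw [Finset.mem_range] at hk <;> congr 2 <;> omega

lemma sum_range_hankelIndex (f : ℕ → R) (n b i : ℕ) (j : Fin (n + 1)) :
    ∑ k ∈ Finset.range (hankelIndex n b j), f (i + k) * f (hankelIndex n b j - 1 - k) =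
      ∑ k ∈ Finset.range j, f (i + k) * f (hankelIndex n b j - 1 - k) +
        if j = Fin.last n then ∑ k ∈ Finset.range b, f (b - 1 - k) * f (i + (n + k)) else 0 := by
  cases j using Fin.lastCases with
  | cast j => simp [Fin.castSucc_ne_last]
  | last =>
    rw [hankelIndex_last, Finset.sum_range_add, if_pos rfl]
    congr 1
    refine Finset.sum_congr rfl fun k _ => ?_
    rw [mul_comm]
    congr 2
    omega

/-- The matrix with determinant `hankelMinor f n 0 b`. -/
def hankelMatrix (f : ℕ → R) (n b : ℕ) : Matrix (Fin (n + 1)) (Fin (n + 1)) R :=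
  of fun i j => f (i + hankelIndex n b j)

lemma det_hankelMatrix (f : ℕ → R) (n b : ℕ) : (hankelMatrix f n b).det = hankelMinor f n 0 b := by
  simp [hankelMatrix, hankelMinor]

lemma det_hankelMatrix_updateCol_last (f : ℕ → R) (n b m : ℕ) :
    ((hankelMatrix f n b).updateCol (Fin.last n) fun i => f (i + (n + m))).det =
      hankelMinor f n 0 m := by
  rw [← det_hankelMatrix]
  congr 1
  ext i j
  cases j using Fin.lastCases <;> simp [hankelMatrix, Fin.castSucc_ne_last]

lemma trace_adjugate_mul_shift_hankelMatrix (f : ℕ → R) (n b : ℕ) :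
    ((hankelMatrix f n b).adjugate * hankelMatrix (fun m => f (m + 1)) n b).trace =
      hankelMinor f n 1 b := by
  rw [trace_adjugate_mul_of_rows_shifted, hankelMinor]
  · congr 1
    ext i j
    cases i using Fin.lastCases <;>
      simp [hankelMatrix, Fin.castSucc_ne_last, add_right_comm]
  · intro i
    ext j
    simp [hankelMatrix, add_right_comm]

lemma exists_hankelMatrix_map_derivation_eq (n b : ℕ) :
    ∃ L K : Matrix (Fin (n + 1)) (Fin (n + 1)) R, L.trace = 0 ∧ K.trace = 0 ∧
      (hankelMatrix (todaSeq D p q) n b).map D =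
        hankelMatrix (fun m => todaSeq D p q (m + 1)) n b -
          q • (L * hankelMatrix (todaSeq D p q) n b + hankelMatrix (todaSeq D p q) n b * K +
            ∑ m ∈ Finset.range b, todaSeq D p q (b - 1 - m) •
              vecMulVec (fun i : Fin (n + 1) => todaSeq D p q (i + (n + m)))
                (Pi.single (Fin.last n) 1)) := by
  set f := todaSeq D p q
  refine ⟨of fun i j => if j < i then f (i - 1 - j) else 0,
    of fun i j => if i < j then f (hankelIndex n b j - 1 - i) else 0,
    by simp [trace], by simp [trace], ?_⟩
  ext i j
  have lower : ∑ k : Fin (n + 1), (if k < i then f (i - 1 - k) else 0) *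
      f (k + hankelIndex n b j) =
        ∑ k ∈ Finset.range i, f (i - 1 - k) * f (k + hankelIndex n b j) := by
    simp only [ite_mul, zero_mul]
    exact sum_fin_ite_lt i fun k => f (i - 1 - k) * f (k + hankelIndex n b j)
  have upper : ∑ k : Fin (n + 1), f (i + hankelIndex n b k) *
      (if k < j then f (hankelIndex n b j - 1 - k) else 0) =
        ∑ k ∈ Finset.range j, f (i + k) * f (hankelIndex n b j - 1 - k) := by
    rw [← sum_fin_ite_lt j fun k => f (i + k) * f (hankelIndex n b j - 1 - k)]
    refine Finset.sum_congr rfl fun k _ => ?_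
    split_ifs with hk
    · rw [hankelIndex_of_lt hk]
    · rw [mul_zero]
  have last : (∑ m ∈ Finset.range b, f (b - 1 - m) •
      vecMulVec (fun i : Fin (n + 1) => f (i + (n + m))) (Pi.single (Fin.last n) 1)) i j =
        if j = Fin.last n then ∑ m ∈ Finset.range b, f (b - 1 - m) * f (i + (n + m)) else 0 := by
    simp [Matrix.sum_apply, vecMulVec_apply, Pi.single_apply]
  have recursion := todaSeq_succ D p q (i + hankelIndex n b j)
  rw [sum_range_add_conv, sum_range_hankelIndex, ← lower, ← upper, ← last] at recursion
  simp only [map_apply, Matrix.sub_apply, Matrix.smul_apply, Matrix.add_apply, mul_apply,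
    smul_eq_mul, hankelMatrix, of_apply]
  linear_combination -recursion

theorem derivation_hankelMinor (n b : ℕ) :
    D (hankelMinor (todaSeq D p q) n 0 b) = hankelMinor (todaSeq D p q) n 1 b -
      q * ∑ m ∈ Finset.range b, todaSeq D p q (b - 1 - m) * hankelMinor (todaSeq D p q) n 0 m := by
  obtain ⟨L, K, hL, hK, hD⟩ := exists_hankelMatrix_map_derivation_eq D p q n b
  rw [← det_hankelMatrix, derivation_det, hD, mul_sub, trace_sub,
    trace_adjugate_mul_shift_hankelMatrix, Matrix.mul_smul, trace_smul, mul_add, mul_add,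
    trace_add, trace_add, trace_adjugate_mul_mul_self, trace_adjugate_mul_self_mul, hL, hK]
  simp [Matrix.mul_sum, trace_sum, trace_adjugate_mul_vecMulVec_single,
    det_hankelMatrix_updateCol_last]

theorem toda_equation (n : ℕ) :
    hankelDet (todaSeq D p q) (n + 2) * hankelDet (todaSeq D p q) n =
      D (D (hankelDet (todaSeq D p q) (n + 1))) * hankelDet (todaSeq D p q) (n + 1) -
        D (hankelDet (todaSeq D p q) (n + 1)) ^ 2 +
        p * q * hankelDet (todaSeq D p q) (n + 1) ^ 2 := by
  have first := derivation_hankelMinor D p q n 0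
  have second := derivation_hankelMinor D p q n 1
  rw [Finset.range_zero, Finset.sum_empty, mul_zero, sub_zero] at first
  rw [Finset.sum_range_one, todaSeq_zero] at second
  rw [hankelDet_desnanot_jacobi, ← hankelMinor_zero_zero, first, ← hankelMinor_comm _ n 0 1,
    second]
  ring

end TodaSequence

section SignedHankel

variable {R : Type*} [CommRing R] (f g : ℕ → R)

/-- The Hankel determinants of `f` and of `g` as one sequence over `ℤ`: those of `f` at the
nonnegative indices, those of `g` at the nonpositive ones. -/
def signedHankelDet (N : ℤ) : R :=
  if 0 ≤ N then hankelDet f N.toNat else hankelDet g (-N).toNat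

lemma signedHankelDet_natCast (n : ℕ) : signedHankelDet f g n = hankelDet f n := by
  simp [signedHankelDet]

lemma signedHankelDet_neg (N : ℤ) : signedHankelDet f g (-N) = signedHankelDet g f N := by
  rcases lt_trichotomy N 0 with h | rfl | h
  · simp [signedHankelDet, h.le, h.not_ge]
  · simp [signedHankelDet]
  · simp [signedHankelDet, h.le, h.not_ge]

lemma map_signedHankelDet {S : Type*} [CommRing S] (e : R →+* S) (N : ℤ) :
    e (signedHankelDet f g N) = signedHankelDet (fun n => e (f n)) (fun n => e (g n)) N := by
  simp only [signedHankelDet, apply_ite e, hankelDet, RingHom.map_det]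
  rfl

end SignedHankel

section Bilinear

variable {k R : Type*} [CommRing k] [CommRing R] [Algebra k R] {D : Derivation k R R}

/-- A solution of `p'' = (2z - 2pq) p`, `q'' = (2z - 2pq) q`, `z' = 1` in a differential ring. With
`w = 2pq` this encodes a solution of P_XXXIV together with a solution `p` of (L1) and (L2). -/
structure IsCoupledPair (D : Derivation k R R) (z p q : R) : Prop where
  deriv_z : D z = 1
  left : D (D p) = (2 * z - 2 * (p * q)) * p
  right : D (D q) = (2 * z - 2 * (p * q)) * q

lemma IsCoupledPair.symm {z p q : R} (h : IsCoupledPair D z p q) : IsCoupledPair D z q p where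
  deriv_z := h.deriv_z
  left := by rw [h.right, mul_comm p q]
  right := by rw [h.left, mul_comm p q]

lemma IsCoupledPair.derivation_wronskian {z p q : R} (h : IsCoupledPair D z p q) :
    D (D p * q - p * D q) = 0 := by
  simp only [map_sub, D.leibniz, h.left, h.right, smul_eq_mul]
  ring

/-- The bilinear relations between consecutive tau functions `a, b, c`: for `Ψ = c / b` and
`W = 2ac / b²`, the field `toda` says that `W = 2s + 2 (log b)''`, while `first` and `right` are
the equations (L1), with parameter `κ / 2`, and (L2). The field `left` is the analogue of `right`
for `a / b`; it makes the notion invariant under reversal. -/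
structure BilinearRelations (D : Derivation k R R) (z s κ a b c : R) : Prop where
  toda : c * a = D (D b) * b - D b ^ 2 + s * b ^ 2
  first : D c * a - c * D a = κ * b ^ 2
  left : D (D a) * b - 2 * (D a * D b) + a * D (D b) + (2 * s - 2 * z) * (a * b) = 0
  right : D (D b) * c - 2 * (D b * D c) + b * D (D c) + (2 * s - 2 * z) * (b * c) = 0

namespace BilinearRelations

variable {z s κ a b c d : R}

lemma symm (h : BilinearRelations D z s κ a b c) : BilinearRelations D z s (-κ) c b a where
  toda := by linear_combination h.toda
  first := by linear_combination -h.first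
  left := by linear_combination h.right
  right := by linear_combination h.left

variable [IsDomain R]

lemma ne_zero (h : BilinearRelations D z s κ a b c) (hκ : κ ≠ 0) (hb : b ≠ 0) : c ≠ 0 := by
  rintro rfl
  have := h.first
  simp_all

/- In terms of `u = ac / b²` and `v = c' / c - b' / b` the relations read `u' = 2uv - κ` and
`v' = 2z - 2u - v²`. Passing from `a, b, c` to `b, c, d` replaces `u` by `u + v' = 2z - u - v²`,
whose derivative is `κ + 2 - 2v (u + v')`. -/
lemma first_succ (h : BilinearRelations D z s κ a b c) (hz : D z = 1) (hb : b ≠ 0)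
    (toda_c : d * b = D (D c) * c - D c ^ 2 + s * c ^ 2) :
    D d * b - d * D b = (κ + 2) * c ^ 2 := by
  have D_two : D (2 : R) = 0 := mod_cast D.map_natCast 2
  have toda_b' := congrArg D h.toda
  have toda_c' := congrArg D toda_c
  have right' := congrArg D h.right
  simp only [D.leibniz, map_add, map_sub, pow_two, smul_eq_mul, D_two, hz, map_zero]
    at toda_b' toda_c' right'
  apply mul_left_cancel₀ (pow_ne_zero 2 hb)
  linear_combination b ^ 2 * toda_c' - 2 * b * D b * toda_c + b * c * right' -
    (b * D c + c * D b) * h.right + c ^ 2 * h.first + c ^ 2 * toda_b' - 2 * c * D c * h.toda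

lemma succ (h : BilinearRelations D z s κ a b c) (hz : D z = 1) (hκ : D κ = 0) (hb : b ≠ 0)
    (toda_c : d * b = D (D c) * c - D c ^ 2 + s * c ^ 2) :
    BilinearRelations D z s (κ + 2) b c d where
  toda := toda_c
  first := h.first_succ hz hb toda_c
  left := h.right
  right := by
    have D_two : D (2 : R) = 0 := mod_cast D.map_natCast 2
    have first_d := h.first_succ hz hb toda_c
    have first_d' := congrArg D first_d
    simp only [D.leibniz, map_add, map_sub, pow_two, smul_eq_mul, D_two, hκ] at first_d'
    apply mul_left_cancel₀ hb
    linear_combination d * h.right + c * first_d' - 2 * D c * first_d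

end BilinearRelations

theorem hankelDet_ne_zero_and_bilinearRelations [IsDomain R] {z p q : R}
    (h : IsCoupledPair D z p q) (hκ : ∀ n : ℕ, D p * q - p * D q + 2 * (n : R) ≠ 0) (n : ℕ) :
    let τ := signedHankelDet (todaSeq D p q) (todaSeq D q p)
    τ n ≠ 0 ∧
      BilinearRelations D z (p * q) (D p * q - p * D q + 2 * n) (τ (n - 1)) (τ n) (τ (n + 1)) := by
  intro τ
  have τ_natCast (n : ℕ) : τ n = hankelDet (todaSeq D p q) n := signedHankelDet_natCast ..
  have τ_neg_one : τ (-1) = q := by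
    simpa [τ, signedHankelDet_neg] using signedHankelDet_natCast (todaSeq D q p) (todaSeq D p q) 1
  have τ_zero : τ 0 = 1 := by simpa using τ_natCast 0
  have τ_one : τ 1 = p := by simpa using τ_natCast 1
  induction n with
  | zero =>
    simp only [Nat.cast_zero, zero_sub, zero_add, τ_neg_one, τ_zero, τ_one]
    exact ⟨one_ne_zero, by simp, by simp, by simp [h.right]; ring,
      by simp [h.left]; ring⟩
  | succ n ih =>
    obtain ⟨hn, hB⟩ := ih
    refine ⟨by simpa using hB.ne_zero (hκ n) hn, ?_⟩
    have toda := toda_equation D p q n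
    simp only [← τ_natCast] at toda
    have D_two : D (2 : R) = 0 := mod_cast D.map_natCast 2
    convert hB.succ (d := τ (n + 2)) h.deriv_z (by simp [h.derivation_wronskian, D_two]) hn
      (mod_cast toda) using 1
    · push_cast; ring
    · simp
    · simp
    · push_cast; congr 1

end Bilinear

section JetRing

open MvPolynomial

/-- The coordinates `z, p, p', q, q'` on which a solution of the coupled system depends. -/
inductive JetVar
  | z | p | dp | q | dq

variable (k : Type*) [CommRing k]

/-- The derivation for which `p, q` is the generic solution of the coupled system, see
`isCoupledPair_jet`. -/
noncomputable def jetDerivation : Derivation k (MvPolynomial JetVar k) (MvPolynomial JetVar k) :=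
  mkDerivation k fun
    | .z => 1
    | .p => X .dp
    | .dp => (2 * X .z - 2 * (X .p * X .q)) * X .p
    | .q => X .dq
    | .dq => (2 * X .z - 2 * (X .p * X .q)) * X .q

/-- The tau functions of the generic solution of the coupled system. -/
noncomputable def jetTau : ℤ → MvPolynomial JetVar k :=
  signedHankelDet (todaSeq (jetDerivation k) (X .p) (X .q))
    (todaSeq (jetDerivation k) (X .q) (X .p))

lemma isCoupledPair_jet : IsCoupledPair (jetDerivation k) (X .z) (X .p) (X .q) := by
  constructor <;> simp [jetDerivation, mkDerivation_X]

theorem bilinearRelations_jetTau [IsDomain k] (N : ℤ) :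
    BilinearRelations (jetDerivation k) (X .z) (X .p * X .q)
      (X .dp * X .q - X .p * X .dq + 2 * (N : MvPolynomial JetVar k))
      (jetTau k (N - 1)) (jetTau k N) (jetTau k (N + 1)) := by
  have D_p : jetDerivation k (X .p) = X .dp := by simp [jetDerivation, mkDerivation_X]
  have D_q : jetDerivation k (X .q) = X .dq := by simp [jetDerivation, mkDerivation_X]
  obtain ⟨n, rfl | rfl⟩ := N.eq_nat_or_neg
  · have h := hankelDet_ne_zero_and_bilinearRelations (isCoupledPair_jet k) (fun n hn => by
      simpa [D_p, D_q] using congrArg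
        (eval fun | .dp => (1 - 2 * n : k) | .q => 1 | _ => 0) hn) n
    simpa [D_p, D_q, jetTau] using h.2
  · have h := hankelDet_ne_zero_and_bilinearRelations (isCoupledPair_jet k).symm (fun n hn => by
      simpa [D_p, D_q] using congrArg
        (eval fun | .dq => (1 - 2 * n : k) | .p => 1 | _ => 0) hn) n
    convert h.2.symm using 1
    · exact mul_comm ..
    · simp [D_p, D_q]; ring
    · rw [← signedHankelDet_neg, jetTau]; congr 1; ring
    · rw [← signedHankelDet_neg, jetTau]
    · rw [← signedHankelDet_neg, jetTau]; congr 1; ring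

end JetRing

section Realization

open Set

variable {𝕜 R : Type*} [NontriviallyNormedField 𝕜] [CommRing R] [Algebra 𝕜 R]
  {D : Derivation 𝕜 R R} {e : R →ₐ[𝕜] (𝕜 → 𝕜)} {I : Set 𝕜}

/-- The algebra homomorphism `e` represents the elements of a differential ring by functions whose
derivatives on `I` are given by the derivation `D`. -/
def IsRealizationOn (D : Derivation 𝕜 R R) (e : R →ₐ[𝕜] (𝕜 → 𝕜)) (I : Set 𝕜) : Prop :=
  ∀ f, ∀ x ∈ I, HasDerivAt (e f) (e (D f) x) x

namespace IsRealizationOn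

lemma eqOn_deriv (h : IsRealizationOn D e I) (hI : IsOpen I) {g : 𝕜 → 𝕜} {f : R}
    (hg : EqOn g (e f) I) : EqOn (deriv g) (e (D f)) I :=
  fun x hx => (hg.deriv hI hx).trans (h f x hx).deriv

lemma eqOn_todaSeq (h : IsRealizationOn D e I) (hI : IsOpen I) {p q : R} {g : ℕ → 𝕜 → 𝕜}
    (zero : EqOn (g 0) (e p) I)
    (succ : ∀ n, ∀ x ∈ I, g (n + 1) x =
      deriv (g n) x + e q x * ∑ k ∈ Finset.range n, g k x * g (n - 1 - k) x) (n : ℕ) :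
    EqOn (g n) (e (todaSeq D p q n)) I := by
  induction n using Nat.strong_induction_on with
  | _ n ih =>
    rcases n with _ | n
    · simpa using zero
    · intro x hx
      have sum_eq : ∑ k ∈ Finset.range n, g k x * g (n - 1 - k) x =
          ∑ k ∈ Finset.range n, e (todaSeq D p q k) x * e (todaSeq D p q (n - 1 - k)) x := by
        refine Finset.sum_congr rfl fun k hk => ?_
        rw [Finset.mem_range] at hk
        rw [ih k (by omega) hx, ih (n - 1 - k) (by omega) hx]
      rw [succ n x hx, h.eqOn_deriv hI (ih n n.lt_succ_self) hx, sum_eq, todaSeq_succ]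
      simp

variable {z s κ a b c : R} {Ψ W : 𝕜 → 𝕜}

lemma eqOn_deriv_div (h : IsRealizationOn D e I) (hI : IsOpen I) (hb : ∀ x ∈ I, e b x ≠ 0)
    (hΨ : EqOn Ψ (e c / e b) I) :
    EqOn (deriv Ψ) (e (D c * b - c * D b) / e (b ^ 2)) I := by
  intro x hx
  rw [hΨ.deriv hI hx, ((h c x hx).div (h b x hx) (hb x hx)).deriv]
  simp

lemma first_wave_equation (h : IsRealizationOn D e I) (hI : IsOpen I)
    (hB : BilinearRelations D z s κ a b c) (hb : ∀ x ∈ I, e b x ≠ 0)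
    (hΨ : EqOn Ψ (e c / e b) I)
    (hW : EqOn W (e (2 * (c * a)) / e (b ^ 2)) I) {x : 𝕜} (hx : x ∈ I) :
    2 * W x * deriv Ψ x - deriv W x * Ψ x - 2 * e κ x * Ψ x = 0 := by
  have hb_sq : ∀ x ∈ I, e (b ^ 2) x ≠ 0 := fun x hx => by simpa using hb x hx
  have first := congrFun (congrArg e hB.first) x
  have D_two : D (2 : R) = 0 := mod_cast D.map_natCast 2
  have hbx := hb x hx
  rw [h.eqOn_deriv_div hI hb hΨ hx, h.eqOn_deriv_div hI hb_sq hW hx, hΨ hx, hW hx]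
  simp only [pow_two, D.leibniz, D_two, smul_eq_mul, map_sub, map_add, map_mul, map_zero,
    map_ofNat, Pi.sub_apply, Pi.add_apply, Pi.mul_apply, Pi.div_apply, Pi.ofNat_apply] at first ⊢
  field_simp
  linear_combination 2 * e c x * e b x * first

lemma second_wave_equation (h : IsRealizationOn D e I) (hI : IsOpen I)
    (hB : BilinearRelations D z s κ a b c) (hb : ∀ x ∈ I, e b x ≠ 0)
    (hΨ : EqOn Ψ (e c / e b) I)
    (hW : EqOn W (e (2 * (c * a)) / e (b ^ 2)) I) {x : 𝕜} (hx : x ∈ I) :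
    deriv (deriv Ψ) x + (W x - 2 * e z x) * Ψ x = 0 := by
  have hb_sq : ∀ x ∈ I, e (b ^ 2) x ≠ 0 := fun x hx => by simpa using hb x hx
  have toda := congrFun (congrArg e hB.toda) x
  have right := congrFun (congrArg e hB.right) x
  have hbx := hb x hx
  rw [h.eqOn_deriv_div hI hb_sq (h.eqOn_deriv_div hI hb hΨ) hx, hΨ hx, hW hx]
  simp only [pow_two, D.leibniz, smul_eq_mul, map_sub, map_add, map_mul, map_zero,
    map_ofNat, Pi.sub_apply, Pi.add_apply, Pi.mul_apply, Pi.div_apply, Pi.ofNat_apply]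
    at toda right ⊢
  field_simp
  linear_combination e b x * right + 2 * e c x * toda

lemma eqOn_of_toda (h : IsRealizationOn D e I) (hI : IsOpen I)
    (hB : BilinearRelations D z s κ a b c) (hb : ∀ x ∈ I, e b x ≠ 0) {τ : 𝕜 → 𝕜}
    (hτ : EqOn τ (e b) I)
    (hW : ∀ x ∈ I, W x = 2 * e s x +
      2 * (deriv (deriv τ) x * τ x - deriv τ x ^ 2) / τ x ^ 2) :
    EqOn W (e (2 * (c * a)) / e (b ^ 2)) I := by
  intro x hx
  have toda := congrFun (congrArg e hB.toda) x
  have hbx := hb x hx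
  have hτ' := h.eqOn_deriv hI hτ
  rw [hW x hx, h.eqOn_deriv hI hτ' hx, hτ' hx, hτ hx]
  simp only [map_sub, map_add, map_mul, map_pow, map_ofNat, Pi.sub_apply, Pi.add_apply,
    Pi.mul_apply, Pi.pow_apply, Pi.div_apply, Pi.ofNat_apply] at toda ⊢
  field_simp
  linear_combination -2 * toda

end IsRealizationOn

lemma eqOn_signedHankelDet {f g : ℕ → R} {F G : ℕ → 𝕜 → 𝕜} (hF : ∀ n, EqOn (F n) (e (f n)) I)
    (hG : ∀ n, EqOn (G n) (e (g n)) I) (N : ℤ) :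
    EqOn (fun x => signedHankelDet (fun n => F n x) (fun n => G n x) N)
      (e (signedHankelDet f g N)) I := by
  intro x hx
  simp only [hF _ hx, hG _ hx]
  exact (map_signedHankelDet f g ((Pi.evalRingHom _ x).comp e.toRingHom) N).symm

end Realization

section CoupledFunctions

open MvPolynomial Set

variable {𝕜 : Type*} [NontriviallyNormedField 𝕜] {I : Set 𝕜} {w p q : 𝕜 → 𝕜}

/-- A pair of functions solving `p'' = (2z - 2pq) p`, `q'' = (2z - 2pq) q` on `I`; the analytic
counterpart of `IsCoupledPair`. -/
structure IsCoupledPairOn (I : Set 𝕜) (p q : 𝕜 → 𝕜) : Prop where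
  differentiableAt_left : ∀ z ∈ I, DifferentiableAt 𝕜 p z
  differentiableAt_right : ∀ z ∈ I, DifferentiableAt 𝕜 q z
  left : ∀ z ∈ I, HasDerivAt (deriv p) ((2 * z - 2 * (p z * q z)) * p z) z
  right : ∀ z ∈ I, HasDerivAt (deriv q) ((2 * z - 2 * (p z * q z)) * q z) z

/-- The specialization of the generic solution of the coupled system to the functions `p, q`. -/
noncomputable def jetEval (p q : 𝕜 → 𝕜) : MvPolynomial JetVar 𝕜 →ₐ[𝕜] (𝕜 → 𝕜) :=
  aeval fun
    | .z => id
    | .p => p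
    | .dp => deriv p
    | .q => q
    | .dq => deriv q

theorem IsCoupledPairOn.isRealizationOn_jetEval (h : IsCoupledPairOn I p q) :
    IsRealizationOn (jetDerivation 𝕜) (jetEval p q) I := by
  intro f z hz
  induction f using MvPolynomial.induction_on with
  | C a => simpa [jetEval, Pi.algebraMap_def] using hasDerivAt_const z a
  | add f g hf hg => simpa using hf.add hg
  | mul_X f i hf =>
    have hX : HasDerivAt (jetEval p q (X i)) (jetEval p q (jetDerivation 𝕜 (X i)) z) z := by
      cases i
      case z => simpa [jetEval, jetDerivation, mkDerivation_X] using hasDerivAt_id z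
      case p => simpa [jetEval, jetDerivation, mkDerivation_X]
        using (h.differentiableAt_left z hz).hasDerivAt
      case dp => simpa [jetEval, jetDerivation, mkDerivation_X] using h.left z hz
      case q => simpa [jetEval, jetDerivation, mkDerivation_X]
        using (h.differentiableAt_right z hz).hasDerivAt
      case dq => simpa [jetEval, jetDerivation, mkDerivation_X] using h.right z hz
    rw [map_mul]
    refine (hf.mul hX).congr_deriv ?_
    simp only [Derivation.leibniz, smul_eq_mul, map_add, map_mul, Pi.add_apply, Pi.mul_apply]
    ring

theorem IsCoupledPairOn.wave_equations (h : IsCoupledPairOn I p q) (hI : IsOpen I)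
    {ψ φ : ℕ → 𝕜 → 𝕜} (hψ_zero : EqOn (ψ 0) p I) (hφ_zero : EqOn (φ 0) q I)
    (hψ_succ : ∀ n, ∀ z ∈ I, ψ (n + 1) z =
      deriv (ψ n) z + q z * ∑ k ∈ Finset.range n, ψ k z * ψ (n - 1 - k) z)
    (hφ_succ : ∀ n, ∀ z ∈ I, φ (n + 1) z =
      deriv (φ n) z + p z * ∑ k ∈ Finset.range n, φ k z * φ (n - 1 - k) z)
    {τ : ℤ → 𝕜 → 𝕜} (hτ : ∀ N z, τ N z = signedHankelDet (fun n => ψ n z) (fun n => φ n z) N)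
    {N : ℤ} (hτ_ne : ∀ z ∈ I, τ N z ≠ 0)
    {Ψ W : 𝕜 → 𝕜} (hΨ : ∀ z ∈ I, Ψ z = τ (N + 1) z / τ N z)
    (hW : ∀ z ∈ I, W z = 2 * (p z * q z) +
      2 * (deriv (deriv (τ N)) z * τ N z - deriv (τ N) z ^ 2) / τ N z ^ 2)
    {z : 𝕜} (hz : z ∈ I) :
    2 * W z * deriv Ψ z - deriv W z * Ψ z -
        2 * (deriv p z * q z - p z * deriv q z + 2 * N) * Ψ z = 0 ∧
      deriv (deriv Ψ) z + (W z - 2 * z) * Ψ z = 0 := by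
  have realization := h.isRealizationOn_jetEval
  have ψ_eq := realization.eqOn_todaSeq hI (p := X .p) (q := X .q) (by simpa [jetEval])
    (by simpa [jetEval])
  have φ_eq := realization.eqOn_todaSeq hI (p := X .q) (q := X .p) (by simpa [jetEval])
    (by simpa [jetEval])
  have τ_eq (M : ℤ) : EqOn (τ M) (jetEval p q (jetTau 𝕜 M)) I := fun x hx =>
    (hτ M x).trans (eqOn_signedHankelDet ψ_eq φ_eq M hx)
  have hB := bilinearRelations_jetTau 𝕜 N
  have τ_ne (x : 𝕜) (hx : x ∈ I) : jetEval p q (jetTau 𝕜 N) x ≠ 0 := τ_eq N hx ▸ hτ_ne x hx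
  have Ψ_eq : EqOn Ψ (jetEval p q (jetTau 𝕜 (N + 1)) / jetEval p q (jetTau 𝕜 N)) I :=
    fun x hx => by rw [hΨ x hx, τ_eq _ hx, τ_eq _ hx, Pi.div_apply]
  have W_eq := realization.eqOn_of_toda hI hB τ_ne (τ_eq N) (W := W) (by simpa [jetEval] using hW)
  constructor
  · simpa [jetEval] using realization.first_wave_equation hI hB τ_ne Ψ_eq W_eq hz
  · simpa [jetEval] using realization.second_wave_equation hI hB τ_ne Ψ_eq W_eq hz

lemma wronskian_eq_of_linear_equation [NeZero (2 : 𝕜)] {α z : 𝕜} (hz : z ∈ I) (hI : IsOpen I)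
    (hp : DifferentiableAt 𝕜 p z) (hq : DifferentiableAt 𝕜 q z)
    (hp_ne : p z ≠ 0) (hw : EqOn w (fun x => 2 * (p x * q x)) I)
    (hL1 : 2 * w z * deriv p z - deriv w z * p z - 4 * α * p z = 0) :
    deriv p z * q z - p z * deriv q z = 2 * α := by
  rw [hw.deriv hI hz, ((hp.hasDerivAt.fun_mul hq.hasDerivAt).const_mul 2).deriv, hw hz] at hL1
  apply mul_left_cancel₀ (mul_ne_zero two_ne_zero hp_ne)
  linear_combination hL1

theorem isCoupledPairOn_of_linear_equations (hI : IsOpen I)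
    (hp : ContDiffOn 𝕜 2 p I) (hq : ContDiffOn 𝕜 2 q I) (hp_ne : ∀ z ∈ I, p z ≠ 0) {c : 𝕜}
    (wronskian : ∀ z ∈ I, deriv p z * q z - p z * deriv q z = c)
    (hL2 : ∀ z ∈ I, deriv (deriv p) z + (2 * (p z * q z) - 2 * z) * p z = 0) :
    IsCoupledPairOn I p q := by
  have diff {f : 𝕜 → 𝕜} (hf : ContDiffOn 𝕜 2 f I) (z : 𝕜) (hz : z ∈ I) :
      DifferentiableAt 𝕜 f z :=
    (hf.differentiableOn two_ne_zero).differentiableAt (hI.mem_nhds hz)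
  have diff' {f : 𝕜 → 𝕜} (hf : ContDiffOn 𝕜 2 f I) (z : 𝕜) (hz : z ∈ I) :
      DifferentiableAt 𝕜 (deriv f) z :=
    ((hf.deriv_of_isOpen (m := 1) hI (by norm_num)).differentiableOn one_ne_zero).differentiableAt
      (hI.mem_nhds hz)
  have left (z : 𝕜) (hz : z ∈ I) : deriv (deriv p) z = (2 * z - 2 * (p z * q z)) * p z := by
    linear_combination hL2 z hz
  have right (z : 𝕜) (hz : z ∈ I) : deriv (deriv q) z = (2 * z - 2 * (p z * q z)) * q z := by
    have wronskian' := EqOn.deriv (g := fun _ => c) wronskian hI hz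
    rw [deriv_const, (((diff' hp z hz).hasDerivAt.fun_mul (diff hq z hz).hasDerivAt).fun_sub
      ((diff hp z hz).hasDerivAt.fun_mul (diff' hq z hz).hasDerivAt)).deriv, left z hz]
      at wronskian'
    apply mul_left_cancel₀ (hp_ne z hz)
    linear_combination -wronskian'
  exact ⟨diff hp, diff hq, fun z hz => left z hz ▸ (diff' hp z hz).hasDerivAt,
    fun z hz => right z hz ▸ (diff' hq z hz).hasDerivAt⟩

end CoupledFunctions

end PainleveXXXIV

open PainleveXXXIV in
theorem painleve34_wave_function_general {𝕜 : Type*} [NontriviallyNormedField 𝕜] [NeZero (2 : 𝕜)]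
    {I : Set 𝕜} (hI : IsOpen I) {α : 𝕜} {w ψ₀ : 𝕜 → 𝕜}
    (hw : ContDiffOn 𝕜 2 w I) (hψ₀ : ContDiffOn 𝕜 2 ψ₀ I) (hψ₀_ne : ∀ z ∈ I, ψ₀ z ≠ 0)
    (hL1 : ∀ z ∈ I, 2 * w z * deriv ψ₀ z - deriv w z * ψ₀ z - 4 * α * ψ₀ z = 0)
    (hL2 : ∀ z ∈ I, deriv (deriv ψ₀) z + (w z - 2 * z) * ψ₀ z = 0)
    {ψ φ : ℕ → 𝕜 → 𝕜} (hψ_zero : ∀ z ∈ I, ψ 0 z = ψ₀ z)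
    (hφ_zero : ∀ z ∈ I, φ 0 z = w z / (2 * ψ₀ z))
    (hψ_succ : ∀ n, ∀ z ∈ I, ψ (n + 1) z = deriv (ψ n) z +
      w z / (2 * ψ₀ z) * ∑ k ∈ Finset.range n, ψ k z * ψ (n - 1 - k) z)
    (hφ_succ : ∀ n, ∀ z ∈ I, φ (n + 1) z = deriv (φ n) z +
      ψ₀ z * ∑ k ∈ Finset.range n, φ k z * φ (n - 1 - k) z)
    {τ : ℤ → 𝕜 → 𝕜} (hτ : ∀ N z, τ N z = signedHankelDet (fun n => ψ n z) (fun n => φ n z) N)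
    {N : ℤ} (hτ_ne : ∀ z ∈ I, τ N z ≠ 0)
    {Ψ W : 𝕜 → 𝕜} (hΨ : ∀ z ∈ I, Ψ z = τ (N + 1) z / τ N z)
    (hW : ∀ z ∈ I, W z = w z +
      2 * (deriv (deriv (τ N)) z * τ N z - deriv (τ N) z ^ 2) / τ N z ^ 2)
    {z : 𝕜} (hz : z ∈ I) :
    2 * W z * deriv Ψ z - deriv W z * Ψ z - 4 * (α + N) * Ψ z = 0 ∧
      deriv (deriv Ψ) z + (W z - 2 * z) * Ψ z = 0 := by
  set q : 𝕜 → 𝕜 := fun z => w z / (2 * ψ₀ z)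
  have hq : ContDiffOn 𝕜 2 q I := hw.div (contDiffOn_const.mul hψ₀) fun z hz =>
    mul_ne_zero two_ne_zero (hψ₀_ne z hz)
  have w_eq (z : 𝕜) (hz : z ∈ I) : w z = 2 * (ψ₀ z * q z) := by
    have := hψ₀_ne z hz
    simp only [q]
    field_simp
  have wronskian (z : 𝕜) (hz : z ∈ I) : deriv ψ₀ z * q z - ψ₀ z * deriv q z = 2 * α :=
    wronskian_eq_of_linear_equation hz hI
      ((hψ₀.differentiableOn two_ne_zero).differentiableAt (hI.mem_nhds hz))
      ((hq.differentiableOn two_ne_zero).differentiableAt (hI.mem_nhds hz))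
      (hψ₀_ne z hz) w_eq (hL1 z hz)
  have pair : IsCoupledPairOn I ψ₀ q :=
    isCoupledPairOn_of_linear_equations hI hψ₀ hq hψ₀_ne wronskian fun z hz =>
      w_eq z hz ▸ hL2 z hz
  obtain ⟨first, second⟩ := pair.wave_equations hI hψ_zero hφ_zero hψ_succ hφ_succ hτ hτ_ne hΨ
    (fun z hz => w_eq z hz ▸ hW z hz) hz
  rw [wronskian z hz] at first
  exact ⟨by linear_combination first, second⟩

/-- If `w` solves P_XXXIV[α] on `I` and `ψ0` is a nowhere-vanishing smooth solution of
(L1) and (L2), then for any integer `N` with `τ_N`, `τ_{N+1}` nowhere zero on `I`, the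
function `Ψ_N = τ_{N+1}/τ_N` satisfies the linear equations (L1) and (L2) with
`W = w + 2 (log τ_N)''` and parameter `α + N`. -/
theorem painleve34_wave_function
    (I : Set ℝ) (hIopen : IsOpen I) (hIconn : I.OrdConnected)
    (α : ℝ) (w ψ0 : ℝ → ℝ)
    (hw_smooth : ContDiffOn ℝ (⊤ : ℕ∞) w I)
    (hw_P34 : ∀ z ∈ I,
      2 * w z * deriv (deriv w) z - (deriv w z) ^ 2 + 4 * (w z) ^ 3
        - 8 * z * (w z) ^ 2 + 16 * α ^ 2 = 0)
    (hψ0_smooth : ContDiffOn ℝ (⊤ : ℕ∞) ψ0 I)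
    (hψ0_ne : ∀ z ∈ I, ψ0 z ≠ 0)
    (hL1 : ∀ z ∈ I, 2 * w z * deriv ψ0 z - deriv w z * ψ0 z - 4 * α * ψ0 z = 0)
    (hL2 : ∀ z ∈ I, deriv (deriv ψ0) z + (w z - 2 * z) * ψ0 z = 0)
    (ψ φ : ℕ → ℝ → ℝ)
    (hψ_zero : ψ 0 = ψ0)
    (hφ_zero : ∀ z ∈ I, φ 0 z = w z / (2 * ψ0 z))
    (hψ_rec : ∀ n : ℕ, ∀ z ∈ I, ψ (n + 1) z =
      deriv (ψ n) z + (w z / (2 * ψ0 z)) *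
        ∑ k ∈ Finset.range n, ψ k z * ψ (n - 1 - k) z)
    (hφ_rec : ∀ n : ℕ, ∀ z ∈ I, φ (n + 1) z =
      deriv (φ n) z + ψ0 z *
        ∑ k ∈ Finset.range n, φ k z * φ (n - 1 - k) z)
    (N : ℤ)
    (hτN_ne : ∀ z ∈ I, hankelTau ψ φ N z ≠ 0)
    (hτN1_ne : ∀ z ∈ I, hankelTau ψ φ (N + 1) z ≠ 0)
    (Ψ W : ℝ → ℝ)
    (hΨ : Ψ = fun z => hankelTau ψ φ (N + 1) z / hankelTau ψ φ N z)
    (hW : W = fun z => w z +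
      2 * (deriv (deriv (hankelTau ψ φ N)) z * hankelTau ψ φ N z
        - (deriv (hankelTau ψ φ N) z) ^ 2) / (hankelTau ψ φ N z) ^ 2) :
    ∀ z ∈ I,
      (2 * W z * deriv Ψ z - deriv W z * Ψ z - 4 * (α + (N : ℝ)) * Ψ z = 0) ∧
      (deriv (deriv Ψ) z + (W z - 2 * z) * Ψ z = 0) :=
  fun _ hz => painleve34_wave_function_general hIopen (contDiffOn_infty.1 hw_smooth 2)
    (contDiffOn_infty.1 hψ0_smooth 2) hψ0_ne hL1 hL2 (fun _ _ => congrFun hψ_zero _)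
    hφ_zero hψ_rec hφ_rec (τ := hankelTau ψ φ) (fun _ _ => rfl) hτN_ne
    (fun _ _ => congrFun hΨ _) (fun _ _ => congrFun hW _) hz
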